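/- arXiv:1705.07193 — 3 statements merged into one kernel-verified Lean document; each statement's English description precedes it below -/
import Mathlib

section
/- Let D, N, t be positive integers with D ≪ N and let f be a sieve function of range D. Then, uniformly in a ∈ ℤ, Σ_{n ≤ N, n ≡ a (mod t)} f(n) = (N/t)·Σ_{k | t} 𝑓̂(k)·c_k(a) + O_ε(D^{1+ε}) for every ε > 0. -/
/-- The Ramanujan sum `c_q(n) = ∑_{d ∣ gcd(q,n)} d · μ(q/d)`. -/
def ramanujanSum (q : ℕ) (n : ℤ) : ℤ :=
  ∑ d ∈ (Nat.gcd q n.natAbs).divisors, (d : ℤ) * ArithmeticFunction.moebius (q / d)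


/-!
Exchanging the order of summation turns the left-hand side into a sum over `d ≤ D` of `f'(d)` times
the number of `n ≤ N` with `d ∣ n` and `n ≡ a (mod t)`. By the Chinese remainder theorem these `n`
form a single residue class modulo `lcm(d, t)` if `gcd(d, t) ∣ a`, and there are none otherwise, so
their number is `N · gcd(d, t) / (d t) + O(1)` or `0` respectively. By Möbius inversion
`∑_{k ∣ g} c_k(a)` equals `g` if `g ∣ a` and `0` otherwise; with `g = gcd(d, t)` this describes both
cases at once, and exchanging summations again produces the Ramanujan coefficients. The total error
is at most `∑_{d ≤ D} |f'(d)|`.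
-/

section

open Finset
open scoped ArithmeticFunction.Moebius

/-- The sieve function `n ↦ ∑_{d ∣ n, d ≤ D} f'(d)` of range `D` with Eratosthenes transform `f'`;
since `Nat.divisors 0 = ∅`, its value at `0` is `0`. -/
def sieveFunction (f' : ℕ → ℂ) (D n : ℕ) : ℂ :=
  ∑ d ∈ n.divisors with d ≤ D, f' d

/-- The `k`-th Ramanujan coefficient `∑_{m ≤ D, k ∣ m} f'(m) / m` of the sieve function of range `D`
with Eratosthenes transform `f'`. -/
noncomputable def ramanujanCoeff (f' : ℕ → ℂ) (D k : ℕ) : ℂ :=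
  ∑ m ∈ Icc 1 D with k ∣ m, f' m / m

theorem divisors_gcd_eq_filter_dvd {n : ℕ} (hn : n ≠ 0) (m : ℕ) :
    (m.gcd n).divisors = {k ∈ n.divisors | k ∣ m} := by
  ext k
  simp [Nat.dvd_gcd_iff, Nat.gcd_eq_zero_iff, hn, and_comm]

theorem ramanujanSum_eq_sum_divisors {q : ℕ} (hq : q ≠ 0) (a : ℤ) :
    ramanujanSum q a = ∑ d ∈ q.divisors, μ (q / d) * if (d : ℤ) ∣ a then (d : ℤ) else 0 := by
  rw [ramanujanSum, Nat.gcd_comm, divisors_gcd_eq_filter_dvd hq, sum_filter]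
  refine sum_congr rfl fun d _ => ?_
  simp only [Int.natCast_dvd, mul_ite, mul_zero, mul_comm (d : ℤ)]

theorem sum_divisors_ramanujanSum {g : ℕ} (hg : 0 < g) (a : ℤ) :
    ∑ k ∈ g.divisors, ramanujanSum k a = if (g : ℤ) ∣ a then (g : ℤ) else 0 := by
  refine (ArithmeticFunction.sum_eq_iff_sum_mul_moebius_eq (R := ℤ)
    (g := fun g => if (g : ℤ) ∣ a then (g : ℤ) else 0)).2 (fun q hq => ?_) g hg
  rw [ramanujanSum_eq_sum_divisors hq.ne']
  exact Nat.sum_divisorsAntidiagonal' fun x y : ℕ =>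
    μ x * if (y : ℤ) ∣ a then (y : ℤ) else 0

theorem gcd_dvd_sub_of_modEq_of_modEq {m n a b x : ℤ} (ha : x ≡ a [ZMOD m])
    (hb : x ≡ b [ZMOD n]) : (m.gcd n : ℤ) ∣ b - a :=
  ((ha.of_dvd (Int.gcd_dvd_left m n)).symm.trans (hb.of_dvd (Int.gcd_dvd_right m n))).dvd

theorem exists_modEq_and_modEq_iff_modEq_lcm {m n a b : ℤ} (h : (m.gcd n : ℤ) ∣ b - a) :
    ∃ v : ℤ, ∀ x : ℤ, x ≡ a [ZMOD m] ∧ x ≡ b [ZMOD n] ↔ x ≡ v [ZMOD m.lcm n] := by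
  obtain ⟨k, hk⟩ := h
  rw [Int.gcd_eq_gcd_ab] at hk
  -- By Bézout `b - a = (m u + n w) k`, so `a + m u k` solves both congruences.
  obtain ⟨v, hva, hvb⟩ : ∃ v : ℤ, v ≡ a [ZMOD m] ∧ v ≡ b [ZMOD n] :=
    ⟨a + m * (m.gcdA n * k), Int.modEq_iff_dvd.2 ⟨-(m.gcdA n * k), by ring⟩,
      Int.modEq_iff_dvd.2 ⟨m.gcdB n * k, by linear_combination hk⟩⟩
  refine ⟨v, fun x => ⟨fun ⟨hxa, hxb⟩ => ?_, fun hx => ⟨?_, ?_⟩⟩⟩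
  · exact Int.modEq_iff_dvd.2 (Int.coe_lcm_dvd (hxa.trans hva.symm).dvd (hxb.trans hvb.symm).dvd)
  · exact (hx.of_dvd (Int.dvd_lcm_left m n)).trans hva
  · exact (hx.of_dvd (Int.dvd_lcm_right m n)).trans hvb

theorem abs_floor_sub_floor_sub_le_one {R : Type*} [CommRing R] [LinearOrder R]
    [IsStrictOrderedRing R] [FloorRing R] (x y : R) :
    |((⌊x⌋ - ⌊y⌋ : ℤ) : R) - (x - y)| ≤ 1 := by
  rw [abs_le]
  push_cast
  constructor <;>
    linarith [Int.floor_le x, Int.lt_floor_add_one x, Int.floor_le y, Int.lt_floor_add_one y]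

theorem abs_card_Ioc_filter_modEq_sub_le_one {x y r : ℤ} (hxy : x ≤ y) (hr : 0 < r) (v : ℤ) :
    |(#{n ∈ Ioc x y | n ≡ v [ZMOD r]} : ℝ) - (y - x) / r| ≤ 1 := by
  have hfloor : ⌊(x - v : ℚ) / r⌋ ≤ ⌊(y - v : ℚ) / r⌋ := by gcongr
  have hcard : (#{n ∈ Ioc x y | n ≡ v [ZMOD r]} : ℤ) = ⌊(y - v : ℚ) / r⌋ - ⌊(x - v : ℚ) / r⌋ := by
    rw [Int.Ioc_filter_modEq_card x y hr, max_eq_left (sub_nonneg.2 hfloor)]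
  have hrat : |(#{n ∈ Ioc x y | n ≡ v [ZMOD r]} : ℚ) - (y - x) / r| ≤ 1 := by
    have hlength : (y - x : ℚ) / r = (y - v) / r - (x - v) / r := by ring
    rw [← Int.cast_natCast, hcard, hlength]
    exact abs_floor_sub_floor_sub_le_one _ _
  exact_mod_cast hrat

theorem abs_card_Ioc_filter_dvd_modEq_sub_le_one {x y : ℤ} (hxy : x ≤ y) {d t : ℕ} (hd : 0 < d)
    (ht : 0 < t) (a : ℤ) :
    |(#{n ∈ Ioc x y | (d : ℤ) ∣ n ∧ n ≡ a [ZMOD t]} : ℝ) -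
      (y - x) / (d * t) * (∑ k ∈ (d.gcd t).divisors, ramanujanSum k a : ℤ)| ≤ 1 := by
  rw [sum_divisors_ramanujanSum (Nat.gcd_pos_of_pos_left t hd)]
  simp only [← Int.modEq_zero_iff_dvd (n := d)]
  split_ifs with hga
  · obtain ⟨v, hv⟩ := exists_modEq_and_modEq_iff_modEq_lcm (m := d) (n := t) (a := 0) (b := a)
      (by simpa using hga)
    have hlcm : 0 < d.lcm t := Nat.lcm_pos hd ht
    have hdensity : ((y - x) / (d * t) * (d.gcd t : ℤ) : ℝ) = (y - x) / (d.lcm t : ℤ) := by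
      have hmul : (d.gcd t : ℝ) * d.lcm t = d * t := by exact_mod_cast Nat.gcd_mul_lcm d t
      push_cast
      rw [← hmul]
      field_simp
    simp only [hv]
    rw [hdensity]
    exact abs_card_Ioc_filter_modEq_sub_le_one hxy (by exact_mod_cast hlcm) v
  · have hempty : {n ∈ Ioc x y | n ≡ 0 [ZMOD d] ∧ n ≡ a [ZMOD t]} = ∅ :=
      filter_eq_empty_iff.2 fun n _ ⟨hn, hna⟩ =>
        hga (by simpa using gcd_dvd_sub_of_modEq_of_modEq hn hna)
    simp [hempty]

theorem card_Icc_one_filter_natCast (N : ℕ) (p : ℤ → Prop) [DecidablePred p] :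
    #{n ∈ Icc 1 N | p (n : ℕ)} = #{n ∈ Ioc (0 : ℤ) N | p n} := by
  refine card_bij (fun n _ => (n : ℤ)) (fun n hn => ?_) (fun _ _ _ _ h => Int.natCast_inj.1 h)
    (fun n hn => ?_)
  · simp only [mem_filter, mem_Icc, mem_Ioc] at hn ⊢
    exact ⟨by omega, hn.2⟩
  · simp only [mem_filter, mem_Ioc] at hn
    lift n to ℕ using hn.1.1.le
    exact ⟨n, by simp only [mem_filter, mem_Icc]; exact ⟨by omega, hn.2⟩, rfl⟩

theorem abs_card_Icc_one_filter_dvd_modEq_sub_le_one (N : ℕ) {d t : ℕ} (hd : 0 < d) (ht : 0 < t)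
    (a : ℤ) :
    |(#{n ∈ Icc 1 N | d ∣ n ∧ ((n : ℕ) : ℤ) ≡ a [ZMOD t]} : ℝ) -
      N / (d * t) * (∑ k ∈ (d.gcd t).divisors, ramanujanSum k a : ℤ)| ≤ 1 := by
  have h := abs_card_Ioc_filter_dvd_modEq_sub_le_one N.cast_nonneg hd ht a
  rw [← card_Icc_one_filter_natCast] at h
  simpa [Int.natCast_dvd_natCast] using h

theorem sieveFunction_eq_sum_Icc (f' : ℕ → ℂ) (D : ℕ) {n : ℕ} (hn : n ≠ 0) :
    sieveFunction f' D n = ∑ d ∈ Icc 1 D with d ∣ n, f' d := by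
  refine sum_congr ?_ fun _ _ => rfl
  ext d
  have hpos : d ∣ n → 0 < d := Nat.pos_of_ne_zero ∘ ne_zero_of_dvd_ne_zero hn
  simp only [mem_filter, Nat.mem_divisors, mem_Icc]
  grind

theorem sum_sieveFunction_eq_sum_mul_card (f' : ℕ → ℂ) (D : ℕ) {s : Finset ℕ} (hs : 0 ∉ s) :
    ∑ n ∈ s, sieveFunction f' D n = ∑ d ∈ Icc 1 D, f' d * #{n ∈ s | d ∣ n} := by
  calc ∑ n ∈ s, sieveFunction f' D n
      = ∑ n ∈ s, ∑ d ∈ Icc 1 D, if d ∣ n then f' d else 0 := sum_congr rfl fun n hn => by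
        rw [sieveFunction_eq_sum_Icc f' D (ne_of_mem_of_not_mem hn hs), sum_filter]
    _ = ∑ d ∈ Icc 1 D, f' d * #{n ∈ s | d ∣ n} := by
        rw [sum_comm]
        simp only [← sum_filter, sum_const, nsmul_eq_mul, mul_comm]

theorem sum_divisors_ramanujanCoeff_mul (f' g : ℕ → ℂ) (D : ℕ) {t : ℕ} (ht : t ≠ 0) :
    ∑ k ∈ t.divisors, ramanujanCoeff f' D k * g k =
      ∑ d ∈ Icc 1 D, f' d / d * ∑ k ∈ (d.gcd t).divisors, g k := by
  simp only [divisors_gcd_eq_filter_dvd ht, ramanujanCoeff, sum_mul, mul_sum, sum_filter, ite_mul,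
    zero_mul, mul_ite, mul_zero]
  rw [sum_comm]

theorem norm_sum_sieveFunction_modEq_sub_le_sum_norm (f' : ℕ → ℂ) (N D : ℕ) {t : ℕ} (ht : 0 < t)
    (a : ℤ) :
    ‖(∑ n ∈ Icc 1 N, if (n : ℤ) ≡ a [ZMOD t] then sieveFunction f' D n else 0) -
        N / t * ∑ k ∈ t.divisors, ramanujanCoeff f' D k * ramanujanSum k a‖ ≤
      ∑ d ∈ Icc 1 D, ‖f' d‖ := by
  rw [← sum_filter, sum_sieveFunction_eq_sum_mul_card f' D (by simp),
    sum_divisors_ramanujanCoeff_mul f' _ D ht.ne', mul_sum, ← sum_sub_distrib]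
  refine norm_sum_le_of_le _ fun d hd => ?_
  have hcount := abs_card_Icc_one_filter_dvd_modEq_sub_le_one N (mem_Icc.1 hd).1 ht a
  set δ : ℝ := #{n ∈ Icc 1 N | d ∣ n ∧ ((n : ℕ) : ℤ) ≡ a [ZMOD t]} -
    N / (d * t) * (∑ k ∈ (d.gcd t).divisors, ramanujanSum k a : ℤ) with hδ
  calc _ = ‖f' d * (δ : ℂ)‖ := by
        rw [hδ, filter_filter]
        simp only [and_comm (a := d ∣ _)]
        push_cast
        ring_nf
    _ = ‖f' d‖ * |δ| := by rw [norm_mul, Complex.norm_real, Real.norm_eq_abs]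
    _ ≤ ‖f' d‖ := mul_le_of_le_one_right (norm_nonneg _) hcount

theorem sum_Icc_norm_le_mul_rpow {E : Type*} [SeminormedAddGroup E] {g : ℕ → E} {c ε : ℝ}
    (hε : 0 ≤ ε) (hg : ∀ q : ℕ, 1 ≤ q → ‖g q‖ ≤ c * (q : ℝ) ^ ε) (D : ℕ) :
    ∑ d ∈ Icc 1 D, ‖g d‖ ≤ c * (D : ℝ) ^ (1 + ε) := by
  have hc : 0 ≤ c := (norm_nonneg (g 1)).trans (by simpa using hg 1 le_rfl)
  calc ∑ d ∈ Icc 1 D, ‖g d‖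
      ≤ ∑ _d ∈ Icc 1 D, c * (D : ℝ) ^ ε := sum_le_sum fun d hd => by
        obtain ⟨hd1, hdD⟩ := mem_Icc.1 hd
        exact (hg d hd1).trans (by gcongr)
    _ = c * (D : ℝ) ^ (1 + ε) := by
        rw [sum_const, Nat.card_Icc, nsmul_eq_mul, Nat.add_sub_cancel,
          Real.rpow_one_add' D.cast_nonneg (by positivity)]
        ring

theorem sieve_function_in_arithmetic_progressions_general {f' : ℕ → ℂ} {c ε : ℝ} (hε : 0 ≤ ε)
    (hf' : ∀ q : ℕ, 1 ≤ q → ‖f' q‖ ≤ c * (q : ℝ) ^ ε) (N D : ℕ) {t : ℕ} (ht : 0 < t) (a : ℤ) :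
    ‖(∑ n ∈ Icc 1 N, if (n : ℤ) ≡ a [ZMOD t] then sieveFunction f' D n else 0) -
        N / t * ∑ k ∈ t.divisors, ramanujanCoeff f' D k * ramanujanSum k a‖ ≤
      c * (D : ℝ) ^ (1 + ε) :=
  (norm_sum_sieveFunction_modEq_sub_le_sum_norm f' N D ht a).trans
    (sum_Icc_norm_le_mul_rpow hε hf' D)

end

/-- Lemma A.2: let `f` be a sieve function of range `D ≪ N`,
i.e. `f(n) = ∑_{d ∣ n, d ≤ D} f'(d)` with essentially bounded Eratosthenes
transform `f'`.  Then, uniformly in `a ∈ ℤ`,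
`∑_{n ≤ N, n ≡ a (mod t)} f(n) = (N/t) ∑_{k ∣ t} f̂(k) c_k(a) + O_ε(D^{1+ε})`,
where `f̂(k) = ∑_{m ≤ D, k ∣ m} f'(m)/m`. -/
theorem sieve_function_in_arithmetic_progressions
    (f' : ℕ → ℂ)
    (hf' : ∀ ε : ℝ, 0 < ε → ∃ c : ℝ, 0 < c ∧ ∀ q : ℕ, 1 ≤ q → ‖f' q‖ ≤ c * (q : ℝ) ^ ε)
    (ε : ℝ) (hε : 0 < ε) (A : ℝ) (hA : 0 < A) :
    ∃ C : ℝ, 0 < C ∧ ∀ (N D t : ℕ) (a : ℤ), 0 < N → 0 < D → 0 < t →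
      (D : ℝ) ≤ A * N →
      ‖(∑ n ∈ Finset.Icc 1 N,
            if (n : ℤ) ≡ a [ZMOD (t : ℤ)] then ∑ d ∈ n.divisors.filter (· ≤ D), f' d else 0)
          - ((N : ℂ) / (t : ℂ)) * ∑ k ∈ t.divisors,
              (∑ m ∈ (Finset.Icc 1 D).filter (k ∣ ·), f' m / (m : ℂ)) *
                (ramanujanSum k a : ℂ)‖
        ≤ C * (D : ℝ) ^ (1 + ε) := by
  obtain ⟨c, hc, hf'c⟩ := hf' ε hε
  exact ⟨c, hc, fun N D _ a _ _ ht _ =>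
    sieve_function_in_arithmetic_progressions_general hε.le hf'c N D ht a⟩
end

section
/- Carmichael's formula: let F : ℕ → ℂ admit a uniformly convergent Ramanujan expansion F(h) = Σ_{q=1}^∞ 𝐹̂(q)·c_q(h) for all h ∈ ℕ, with coefficients 𝐹̂(q) ∈ ℂ independent of h (a pure expansion, where the only h-dependence is through c_q(h)). Then for every ℓ ≥ 1 the coefficients are recovered as 𝐹̂(ℓ) = (1/φ(ℓ))·lim_{x→∞} (1/x)·Σ_{h ≤ x} F(h)·c_ℓ(h); in particular this limit exists. -/
/-!
Write `η_m(n)` for `m` if `m ∣ n` and `0` otherwise, so that `c_q` is the Möbius inverse of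
`m ↦ η_m`. Since `η_m η_e = gcd(m, e) η_{lcm(m, e)}` and every `η_m` has mean value `1`, the product
`η_m η_e` has mean value `gcd(m, e) = ∑_{k ∣ m, k ∣ e} φ(k)`. Möbius inversion in `m` and then in
`e` yields the orthogonality relations: `c_q c_ℓ` has mean value `φ(ℓ)` if `q = ℓ` and `0`
otherwise. As `c_ℓ` is bounded, the expansion of `F c_ℓ` still converges uniformly, and mean values
pass to uniform limits.
-/

open Filter Finset Topology
open scoped ArithmeticFunction.Moebius

lemma tendstoUniformlyOn_smul_of_norm_le {α ι 𝕜 E : Type*} [SeminormedRing 𝕜]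
    [SeminormedAddCommGroup E] [Module 𝕜 E] [IsBoundedSMul 𝕜 E] {p : Filter ι} {s : Set α}
    {f : ι → α → E} {F : α → E} {g : α → 𝕜} {C : ℝ}
    (hf : TendstoUniformlyOn f F p s) (hg : ∀ a ∈ s, ‖g a‖ ≤ C) :
    TendstoUniformlyOn (fun i a ↦ g a • f i a) (fun a ↦ g a • F a) p s := by
  rw [Metric.tendstoUniformlyOn_iff] at hf ⊢
  intro ε hε
  filter_upwards [hf (ε / (|C| + 1)) (by positivity)] with i hi a ha
  calc dist (g a • F a) (g a • f i a) ≤ ‖g a‖ * dist (F a) (f i a) := dist_smul_le ..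
    _ ≤ |C| * dist (F a) (f i a) := by gcongr; exact (hg a ha).trans (le_abs_self C)
    _ ≤ (|C| + 1) * dist (F a) (f i a) := by gcongr; exact le_add_of_nonneg_right zero_le_one
    _ < ε := (lt_div_iff₀' (by positivity)).1 (hi a ha)

section MeanValue

variable {E : Type*} [SeminormedAddCommGroup E] [NormedSpace ℝ E]

/-- The average of `f 1, …, f x`, with value `0` at `x = 0`. -/
noncomputable def meanUpTo (f : ℕ → E) (x : ℕ) : E :=
  (x : ℝ)⁻¹ • ∑ h ∈ Icc 1 x, f h

/-- `f` has (asymptotic) mean value `c`: its averages over `1, …, x` tend to `c` as `x → ∞`. -/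
def HasMeanValue (f : ℕ → E) (c : E) : Prop :=
  Tendsto (fun x ↦ meanUpTo f x) atTop (𝓝 c)

lemma HasMeanValue.const_smul {f : ℕ → E} {c : E} (hf : HasMeanValue f c) (r : ℝ) :
    HasMeanValue (fun h ↦ r • f h) (r • c) := by
  refine (Tendsto.const_smul hf r).congr fun x ↦ ?_
  simp only [meanUpTo, ← smul_sum, smul_comm r]

lemma HasMeanValue.smul_const {f : ℕ → ℝ} {c : ℝ} (hf : HasMeanValue f c) (v : E) :
    HasMeanValue (fun h ↦ f h • v) (c • v) := by
  refine (Tendsto.smul_const hf v).congr fun x ↦ ?_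
  simp only [meanUpTo, ← sum_smul, smul_eq_mul, mul_smul]

lemma HasMeanValue.sum {ι : Type*} {s : Finset ι} {f : ι → ℕ → E} {c : ι → E}
    (hf : ∀ i ∈ s, HasMeanValue (f i) (c i)) :
    HasMeanValue (fun h ↦ ∑ i ∈ s, f i h) (∑ i ∈ s, c i) := by
  refine (tendsto_finsetSum s hf).congr fun x ↦ ?_
  simp only [meanUpTo, ← smul_sum, sum_comm (s := s)]

lemma meanUpTo_sub (f g : ℕ → E) (x : ℕ) :
    meanUpTo f x - meanUpTo g x = meanUpTo (f - g) x := by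
  simp only [meanUpTo, ← smul_sub, ← sum_sub_distrib, Pi.sub_apply]

lemma norm_meanUpTo_le {f : ℕ → E} {C : ℝ} (hf : ∀ h ∈ Set.Ici 1, ‖f h‖ ≤ C) (x : ℕ) :
    ‖meanUpTo f x‖ ≤ C := by
  have hC : 0 ≤ C := (norm_nonneg _).trans (hf 1 Set.self_mem_Ici)
  have hsum : ‖∑ h ∈ Icc 1 x, f h‖ ≤ x * C := by
    simpa using norm_sum_le_of_le (Icc 1 x) fun h hh ↦ hf h (mem_Icc.1 hh).1
  calc ‖meanUpTo f x‖ = (x : ℝ)⁻¹ * ‖∑ h ∈ Icc 1 x, f h‖ := by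
        rw [meanUpTo, norm_smul, norm_inv, Real.norm_natCast]
    _ ≤ (x : ℝ)⁻¹ * (x * C) := by gcongr
    _ = (x : ℝ)⁻¹ * x * C := (mul_assoc _ _ _).symm
    _ ≤ C := mul_le_of_le_one_left hC inv_mul_le_one

lemma tendstoUniformly_meanUpTo {ι : Type*} {p : Filter ι} {f : ι → ℕ → E} {F : ℕ → E}
    (hf : TendstoUniformlyOn f F p (Set.Ici 1)) :
    TendstoUniformly (fun i ↦ meanUpTo (f i)) (meanUpTo F) p := by
  rw [Metric.tendstoUniformly_iff]
  intro ε hε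
  filter_upwards [Metric.tendstoUniformlyOn_iff.1 hf (ε / 2) (half_pos hε)] with i hi x
  rw [dist_eq_norm, meanUpTo_sub]
  refine (norm_meanUpTo_le (fun h hh ↦ ?_) x).trans_lt (half_lt_self hε)
  exact (dist_eq_norm (F h) (f i h)).symm.trans_le (hi h hh).le

lemma HasMeanValue.of_tendstoUniformlyOn {ι : Type*} {p : Filter ι} [p.NeBot]
    {f : ι → ℕ → E} {F : ℕ → E} {c : ι → E} {c₀ : E}
    (hF : TendstoUniformlyOn f F p (Set.Ici 1))
    (hf : ∀ᶠ i in p, HasMeanValue (f i) (c i)) (hc : Tendsto c p (𝓝 c₀)) :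
    HasMeanValue F c₀ :=
  (tendstoUniformly_meanUpTo hF).tendsto_of_eventually_tendsto hf hc

end MeanValue

section MoebiusInversion

variable {R : Type*} [Ring R]

lemma sum_divisors_ite_dvd_totient {n : ℕ} (hn : 0 < n) (e : ℕ) :
    ∑ i ∈ n.divisors, (if i ∣ e then (i.totient : R) else 0) = (n.gcd e : R) := by
  have hdiv : {i ∈ n.divisors | i ∣ e} = (n.gcd e).divisors := by
    ext i
    simp [Nat.dvd_gcd_iff, hn.ne']
  rw [← sum_filter, hdiv, ← Nat.cast_sum, Nat.sum_totient]

lemma sum_moebius_mul_gcd {q : ℕ} (hq : 0 < q) (e : ℕ) :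
    ∑ x ∈ q.divisorsAntidiagonal, (μ x.1 : R) * (x.2.gcd e : R) =
      if q ∣ e then (q.totient : R) else 0 :=
  ArithmeticFunction.sum_eq_iff_sum_mul_moebius_eq
    (f := fun i ↦ if i ∣ e then (i.totient : R) else 0) (g := fun n ↦ (n.gcd e : R)) |>.1
    (fun _ hn ↦ sum_divisors_ite_dvd_totient hn e) q hq

lemma sum_moebius_mul_ite_dvd {n : ℕ} (hn : 0 < n) (q : ℕ) (r : R) :
    ∑ x ∈ n.divisorsAntidiagonal, (μ x.1 : R) * (if q ∣ x.2 then r else 0) =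
      if n = q then r else 0 := by
  refine ArithmeticFunction.sum_eq_iff_sum_mul_moebius_eq
    (f := fun i ↦ if i = q then r else 0) (g := fun m ↦ if q ∣ m then r else 0) |>.1
    (fun m hm ↦ ?_) n hn
  simp [sum_ite_eq', Nat.mem_divisors, hm.ne']

end MoebiusInversion

/-- The sum of `exp (2πi a n / m)` over all residues `a` modulo `m`, given by its value: `m` if
`m ∣ n` and `0` otherwise. The Ramanujan sum is its Möbius inverse in `m`. -/
def rootsOfUnitySum (m : ℕ) (n : ℤ) : ℤ :=
  if (m : ℤ) ∣ n then m else 0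

lemma rootsOfUnitySum_mul (m e : ℕ) (n : ℤ) :
    rootsOfUnitySum m n * rootsOfUnitySum e n = m.gcd e * rootsOfUnitySum (m.lcm e) n := by
  have hdvd : ((m.lcm e : ℕ) : ℤ) ∣ n ↔ (m : ℤ) ∣ n ∧ (e : ℤ) ∣ n := by
    simp only [Int.natCast_dvd, Nat.lcm_dvd_iff]
  have hgcd : (m : ℤ) * e = m.gcd e * m.lcm e := mod_cast (Nat.gcd_mul_lcm m e).symm
  simp only [rootsOfUnitySum, hdvd]
  rw [ite_zero_mul_ite_zero, hgcd, mul_ite, mul_zero]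

lemma ramanujanSum_eq_sum_moebius_mul (q : ℕ) (n : ℤ) :
    ramanujanSum q n =
      ∑ x ∈ q.divisorsAntidiagonal, μ x.1 * rootsOfUnitySum x.2 n := by
  rcases q.eq_zero_or_pos with rfl | hq
  · simp [ramanujanSum]
  have hdiv : (q.gcd n.natAbs).divisors = q.divisors.filter fun d : ℕ ↦ (d : ℤ) ∣ n := by
    ext d
    simp [Nat.dvd_gcd_iff, Int.natCast_dvd, hq.ne']
  rw [ramanujanSum, hdiv, sum_filter,
    Nat.sum_divisorsAntidiagonal' fun a d ↦ μ a * rootsOfUnitySum d n]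
  simp only [rootsOfUnitySum, mul_comm (μ _), ite_mul, zero_mul]

lemma abs_ramanujanSum_le (q : ℕ) (n : ℤ) :
    |ramanujanSum q n| ≤ ∑ d ∈ q.divisors, (d : ℤ) := by
  rw [ramanujanSum_eq_sum_moebius_mul,
    Nat.sum_divisorsAntidiagonal' fun a d ↦ μ a * rootsOfUnitySum d n]
  refine (abs_sum_le_sum_abs _ _).trans (sum_le_sum fun d _ ↦ ?_)
  have hroots : |rootsOfUnitySum d n| ≤ d := by
    unfold rootsOfUnitySum
    split_ifs <;> simp
  calc |μ (q / d) * rootsOfUnitySum d n| = |μ (q / d)| * |rootsOfUnitySum d n| := abs_mul _ _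
    _ ≤ 1 * d := by gcongr; exact ArithmeticFunction.abs_moebius_le_one
    _ = d := one_mul _

lemma hasMeanValue_rootsOfUnitySum {m : ℕ} (hm : 0 < m) :
    HasMeanValue (fun h : ℕ ↦ (rootsOfUnitySum m h : ℝ)) 1 := by
  have hm' : (m : ℝ) ≠ 0 := mod_cast hm.ne'
  have hfloor : Tendsto (fun x : ℕ ↦ (m : ℝ) * (⌊(m : ℝ)⁻¹ * x⌋₊ / x)) atTop (𝓝 1) := by
    simpa [hm'] using ((tendsto_nat_floor_mul_div_atTop (inv_nonneg.2 m.cast_nonneg)).comp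
      (tendsto_natCast_atTop_atTop (R := ℝ))).const_mul (m : ℝ)
  refine hfloor.congr fun x ↦ ?_
  have hcount : ∑ h ∈ Icc 1 x, (rootsOfUnitySum m h : ℝ) = (x / m : ℕ) * m := by
    have hcard : #{h ∈ Icc 1 x | m ∣ h} = x / m := Nat.Ioc_filter_dvd_card_eq_div x m
    simp [rootsOfUnitySum, Int.natCast_dvd_natCast, ← sum_filter, hcard]
  rw [meanUpTo, hcount, inv_mul_eq_div, Nat.floor_div_eq_div, smul_eq_mul]
  ring

lemma hasMeanValue_rootsOfUnitySum_mul {m e : ℕ} (hm : 0 < m) (he : 0 < e) :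
    HasMeanValue (fun h : ℕ ↦ (rootsOfUnitySum m h * rootsOfUnitySum e h : ℝ)) (m.gcd e) := by
  have hlcm := (hasMeanValue_rootsOfUnitySum (Nat.lcm_pos hm he)).const_smul (m.gcd e)
  simpa only [smul_eq_mul, mul_one, ← Int.cast_natCast (R := ℝ) (m.gcd e), ← Int.cast_mul,
    rootsOfUnitySum_mul] using hlcm

lemma HasMeanValue.ramanujanSum_mul {g G : ℕ → ℝ} (q : ℕ)
    (hg : ∀ m > 0, HasMeanValue (fun h : ℕ ↦ rootsOfUnitySum m h * g h) (G m)) :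
    HasMeanValue (fun h : ℕ ↦ ramanujanSum q h * g h)
      (∑ x ∈ q.divisorsAntidiagonal, μ x.1 * G x.2) := by
  have hsum := HasMeanValue.sum fun x (hx : x ∈ q.divisorsAntidiagonal) ↦
    (hg x.2 (Nat.pos_of_mem_divisors (Nat.snd_mem_divisors_of_mem_antidiagonal hx))).const_smul
      (μ x.1 : ℝ)
  simpa [ramanujanSum_eq_sum_moebius_mul, sum_mul, mul_assoc] using hsum

lemma hasMeanValue_ramanujanSum_mul_rootsOfUnitySum {q e : ℕ} (hq : 0 < q) (he : 0 < e) :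
    HasMeanValue (fun h : ℕ ↦ (ramanujanSum q h * rootsOfUnitySum e h : ℝ))
      (if q ∣ e then q.totient else 0) := by
  rw [← sum_moebius_mul_gcd hq e]
  exact HasMeanValue.ramanujanSum_mul q fun m hm ↦ hasMeanValue_rootsOfUnitySum_mul hm he

lemma hasMeanValue_ramanujanSum_mul_ramanujanSum {ℓ q : ℕ} (hℓ : 0 < ℓ) (hq : 0 < q) :
    HasMeanValue (fun h : ℕ ↦ (ramanujanSum ℓ h * ramanujanSum q h : ℝ))
      (if ℓ = q then q.totient else 0) := by
  rw [← sum_moebius_mul_ite_dvd hℓ q (q.totient : ℝ)]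
  refine HasMeanValue.ramanujanSum_mul (G := fun e ↦ if q ∣ e then (q.totient : ℝ) else 0) ℓ
    fun e he ↦ ?_
  simpa only [mul_comm] using hasMeanValue_ramanujanSum_mul_rootsOfUnitySum hq he

lemma hasMeanValue_ramanujanSum_smul_sum {E : Type*} [SeminormedAddCommGroup E] [NormedSpace ℝ E]
    (Fhat : ℕ → E) {ℓ Q : ℕ} (hℓ : 1 ≤ ℓ) (hQ : ℓ ≤ Q) :
    HasMeanValue
      (fun h : ℕ ↦ (ramanujanSum ℓ h : ℝ) • ∑ q ∈ Icc 1 Q, (ramanujanSum q h : ℝ) • Fhat q)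
      ((ℓ.totient : ℝ) • Fhat ℓ) := by
  have hsum := HasMeanValue.sum fun q (hq : q ∈ Icc 1 Q) ↦
    (hasMeanValue_ramanujanSum_mul_ramanujanSum hℓ (mem_Icc.1 hq).1).smul_const (Fhat q)
  simpa [smul_sum, mul_smul, ite_smul, hℓ, hQ] using hsum

theorem carmichael_formula_general {E : Type*} [SeminormedAddCommGroup E] [NormedSpace ℝ E]
    (F Fhat : ℕ → E)
    (hconv : TendstoUniformlyOn
      (fun (Q : ℕ) (h : ℕ) ↦ ∑ q ∈ Icc 1 Q, (ramanujanSum q h : ℝ) • Fhat q)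
      F atTop (Set.Ici 1))
    (ℓ : ℕ) (hℓ : 1 ≤ ℓ) :
    HasMeanValue (fun h ↦ (ramanujanSum ℓ h : ℝ) • F h) ((ℓ.totient : ℝ) • Fhat ℓ) := by
  have hbound (h : ℕ) : ‖(ramanujanSum ℓ h : ℝ)‖ ≤ ∑ d ∈ ℓ.divisors, (d : ℝ) := by
    simpa using Int.cast_le (R := ℝ).2 (abs_ramanujanSum_le ℓ h)
  refine HasMeanValue.of_tendstoUniformlyOn
    (tendstoUniformlyOn_smul_of_norm_le hconv fun h _ ↦ hbound h) ?_ tendsto_const_nhds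
  filter_upwards [eventually_ge_atTop ℓ] with Q hQ
  exact hasMeanValue_ramanujanSum_smul_sum Fhat hℓ hQ

/-- Carmichael's formula, Lemma A.4: if `F : ℕ → ℂ` admits a
uniformly convergent pure Ramanujan expansion
`F(h) = ∑_{q=1}^∞ F̂(q) c_q(h)` (for all `h ≥ 1`), with coefficients `F̂(q)`
independent of `h`, then for every `ℓ ≥ 1` the limit
`lim_{x→∞} (1/x) ∑_{h ≤ x} F(h) c_ℓ(h)` exists and equals `φ(ℓ) F̂(ℓ)`,
i.e. `F̂(ℓ) = (1/φ(ℓ)) lim_{x→∞} (1/x) ∑_{h ≤ x} F(h) c_ℓ(h)`. -/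
theorem carmichael_formula
    (F : ℕ → ℂ) (Fhat : ℕ → ℂ)
    (hconv : TendstoUniformlyOn
      (fun (Q : ℕ) (h : ℕ) => ∑ q ∈ Finset.Icc 1 Q, Fhat q * (ramanujanSum q (h : ℤ) : ℂ))
      F Filter.atTop (Set.Ici 1))
    (ℓ : ℕ) (hℓ : 1 ≤ ℓ) :
    Filter.Tendsto
      (fun x : ℕ => (1 / (x : ℂ)) * ∑ h ∈ Finset.Icc 1 x, F h * (ramanujanSum ℓ (h : ℤ) : ℂ))
      Filter.atTop (nhds ((Nat.totient ℓ : ℂ) * Fhat ℓ)) := by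
  have hmean : HasMeanValue (fun h ↦ (ramanujanSum ℓ h : ℝ) • F h) ((ℓ.totient : ℝ) • Fhat ℓ) :=
    carmichael_formula_general F Fhat (by simpa [mul_comm] using hconv) ℓ hℓ
  simpa [HasMeanValue, meanUpTo, mul_comm] using hmean
end

section
/- Let G, q, t, N be positive integers, let f : ℕ → ℂ be essentially bounded, suppose every prime factor of q exceeds G (i.e. gcd(q, P(G)) = 1), and let a be an integer with 0 < |a| ≤ G. Then Σ_{n ≤ N, n ≡ a (mod t), gcd(n,q)=1} f(n) = Σ_{n ≤ N, n ≡ a (mod t)} f(n) + O_ε((qN)^ε · (N/(tG) + 1)) for every ε > 0. -/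
/-- `P(G)`: the product of all primes `p ≤ G`. -/
def primesProd (G : ℕ) : ℕ := ∏ p ∈ (Finset.Icc 1 G).filter Nat.Prime, p

/-!
The two sums differ only at those `n ≤ N`, `n ≡ a [ZMOD t]`, which share a prime factor `p` with
`q`. No prime factor `p` of `q` divides both `a` and `t`, since `0 < |a| ≤ G < p`; as `p ∣ n` and
`n ≡ a [ZMOD t]`, this forces `p` to be coprime to `t`. Such `n` therefore lie in a single residue
class modulo `t * p`, and there are at most `N / (t * p) + 1 ≤ N / (t * G) + 1` of them. As
`2 ^ ω(q) ≤ q`, there are at most `log q / log 2 ≪ q ^ ε` choices for `p`.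
-/

section

open Finset

lemma lt_of_prime_of_dvd_of_coprime_primesProd {p q G : ℕ} (hp : p.Prime) (hpq : p ∣ q)
    (hqG : q.Coprime (primesProd G)) : G < p := by
  by_contra! hpG
  have hdvd : p ∣ primesProd G :=
    dvd_prod_of_mem (fun p ↦ p) (mem_filter.mpr ⟨mem_Icc.mpr ⟨hp.one_le, hpG⟩, hp⟩)
  exact Nat.not_coprime_of_dvd_of_dvd hp.one_lt hpq hdvd hqG

lemma coprime_of_le_of_coprime_primesProd {m q G : ℕ} (hm : m ≠ 0) (hmG : m ≤ G)
    (hqG : q.Coprime (primesProd G)) : m.Coprime q :=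
  Nat.coprime_of_dvd fun _ hp hpm hpq ↦
    (lt_of_prime_of_dvd_of_coprime_primesProd hp hpq hqG).not_ge
      ((Nat.le_of_dvd hm.bot_lt hpm).trans hmG)

lemma two_pow_card_primeFactors_le {q : ℕ} (hq : q ≠ 0) : 2 ^ #q.primeFactors ≤ q :=
  calc 2 ^ #q.primeFactors
      ≤ ∏ p ∈ q.primeFactors, p :=
        pow_card_le_prod _ _ _ fun _ hp ↦ (Nat.prime_of_mem_primeFactors hp).two_le
    _ ≤ q := Nat.le_of_dvd hq.bot_lt (Nat.prod_primeFactors_dvd q)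

lemma card_primeFactors_le_rpow {q : ℕ} (hq : q ≠ 0) {ε : ℝ} (hε : 0 < ε) :
    (#q.primeFactors : ℝ) ≤ (q : ℝ) ^ ε / (ε * Real.log 2) := by
  rw [← div_div, le_div_iff₀ (Real.log_pos one_lt_two)]
  calc #q.primeFactors * Real.log 2
      = Real.log (2 ^ #q.primeFactors) := (Real.log_pow _ _).symm
    _ ≤ Real.log q :=
        Real.log_le_log (by positivity) (by exact_mod_cast two_pow_card_primeFactors_le hq)
    _ ≤ (q : ℝ) ^ ε / ε := Real.log_le_rpow_div q.cast_nonneg hε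

lemma card_le_div_add_one_of_pairwise_modEq {s : Finset ℕ} {N r : ℕ} (hN : ∀ n ∈ s, n ≤ N)
    (hr : (s : Set ℕ).Pairwise (· ≡ · [MOD r])) : #s ≤ N / r + 1 := by
  have hmaps : ∀ n ∈ s, n / r ∈ range (N / r + 1) := fun n hn ↦
    mem_range_succ_iff.mpr (Nat.div_le_div_right (hN n hn))
  have hinj : (s : Set ℕ).InjOn (· / r) := by
    intro m hm n hn hdiv
    have hmod : m % r = n % r := hr.of_refl hm hn
    rw [← Nat.div_add_mod m r, ← Nat.div_add_mod n r, hmod, show m / r = n / r from hdiv]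
  simpa only [card_range] using card_le_card_of_injOn _ hmaps hinj

lemma coprime_of_modEq_of_dvd {p t : ℕ} {n a : ℤ} (hp : p.Prime) (hpa : ¬ p ∣ a.gcd t)
    (hna : n ≡ a [ZMOD t]) (hpn : (p : ℤ) ∣ n) : t.Coprime p := by
  rw [Nat.coprime_comm, hp.coprime_iff_not_dvd]
  intro hpt
  have hpt' : (p : ℤ) ∣ t := Int.natCast_dvd_natCast.mpr hpt
  exact hpa (Int.dvd_gcd ((hna.of_dvd hpt').dvd_iff.mp hpn) hpt')

lemma card_modEq_and_dvd_le {p t : ℕ} {a : ℤ} (hp : p.Prime) (hpa : ¬ p ∣ a.gcd t) (N : ℕ) :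
    #{n ∈ Icc 1 N | ((n : ℕ) : ℤ) ≡ a [ZMOD t] ∧ p ∣ n} ≤ N / (t * p) + 1 := by
  refine card_le_div_add_one_of_pairwise_modEq
    (fun n hn ↦ (mem_Icc.mp (mem_filter.mp hn).1).2) fun m hm n hn _ ↦ ?_
  obtain ⟨-, hma, hpm⟩ := mem_filter.mp hm
  obtain ⟨-, hna, hpn⟩ := mem_filter.mp hn
  have htp : t.Coprime p := coprime_of_modEq_of_dvd hp hpa hma (Int.natCast_dvd_natCast.mpr hpm)
  have hmod_t : m ≡ n [MOD t] := Int.natCast_modEq_iff.mp (hma.trans hna.symm)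
  have hmod_p : m ≡ n [MOD p] :=
    (Nat.modEq_zero_iff_dvd.mpr hpm).trans (Nat.modEq_zero_iff_dvd.mpr hpn).symm
  exact (Nat.modEq_and_modEq_iff_modEq_mul htp).mp ⟨hmod_t, hmod_p⟩

lemma card_and_not_coprime_le_sum (s : Finset ℕ) (P : ℕ → Prop) [DecidablePred P] {q : ℕ}
    (hq : q ≠ 0) :
    #{n ∈ s | P n ∧ ¬ n.Coprime q} ≤ ∑ p ∈ q.primeFactors, #{n ∈ s | P n ∧ p ∣ n} := by
  refine (card_le_card fun n hn ↦ ?_).trans card_biUnion_le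
  obtain ⟨hns, hPn, hnq⟩ := mem_filter.mp hn
  obtain ⟨p, hp, hpn, hpq⟩ := Nat.Prime.not_coprime_iff_dvd.mp hnq
  exact mem_biUnion.mpr
    ⟨p, Nat.mem_primeFactors.mpr ⟨hp, hpq, hq⟩, mem_filter.mpr ⟨hns, hPn, hpn⟩⟩

lemma card_modEq_and_not_coprime_le {G q t : ℕ} {a : ℤ} (hG : 0 < G) (hq : q ≠ 0) (ht : 0 < t)
    (hqG : q.Coprime (primesProd G)) (haq : (a.gcd t).Coprime q) (N : ℕ) :
    (#{n ∈ Icc 1 N | ((n : ℕ) : ℤ) ≡ a [ZMOD t] ∧ ¬ n.Coprime q} : ℝ) ≤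
      #q.primeFactors * ((N : ℝ) / ((t : ℝ) * G) + 1) := by
  have hcard_of_mem {p : ℕ} (hpq : p ∈ q.primeFactors) :
      (#{n ∈ Icc 1 N | ((n : ℕ) : ℤ) ≡ a [ZMOD t] ∧ p ∣ n} : ℝ) ≤ N / (t * G) + 1 := by
    obtain ⟨hp, hpq, -⟩ := Nat.mem_primeFactors.mp hpq
    have hGp : G ≤ p := (lt_of_prime_of_dvd_of_coprime_primesProd hp hpq hqG).le
    have hpa : ¬ p ∣ a.gcd t := fun h ↦ Nat.not_coprime_of_dvd_of_dvd hp.one_lt h hpq haq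
    calc (#{n ∈ Icc 1 N | ((n : ℕ) : ℤ) ≡ a [ZMOD t] ∧ p ∣ n} : ℝ)
        ≤ (N / (t * p) : ℕ) + 1 := by exact_mod_cast card_modEq_and_dvd_le hp hpa N
      _ ≤ N / (t * p) + 1 := by
          gcongr
          exact_mod_cast Nat.cast_div_le (α := ℝ)
      _ ≤ N / (t * G) + 1 := by gcongr
  calc (#{n ∈ Icc 1 N | ((n : ℕ) : ℤ) ≡ a [ZMOD t] ∧ ¬ n.Coprime q} : ℝ)
      ≤ ∑ p ∈ q.primeFactors, (#{n ∈ Icc 1 N | ((n : ℕ) : ℤ) ≡ a [ZMOD t] ∧ p ∣ n} : ℝ) := by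
        exact_mod_cast card_and_not_coprime_le_sum _ _ hq
    _ ≤ #q.primeFactors * ((N : ℝ) / ((t : ℝ) * G) + 1) := by
        simpa only [nsmul_eq_mul] using sum_le_card_nsmul _ _ _ fun p hp ↦ hcard_of_mem hp

variable {E : Type*} [SeminormedAddCommGroup E]

lemma norm_sum_ite_and_sub_sum_ite_le {ι : Type*} {s : Finset ι} {f : ι → E} {M : ℝ}
    (P Q : ι → Prop) [DecidablePred P] [DecidablePred Q] (hf : ∀ i ∈ s, ‖f i‖ ≤ M) :
    ‖(∑ i ∈ s, if P i ∧ Q i then f i else 0) - ∑ i ∈ s, if P i then f i else 0‖ ≤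
      #{i ∈ s | P i ∧ ¬ Q i} * M := by
  have hsplit : (∑ i ∈ s, if P i then f i else 0) =
      (∑ i ∈ s, if P i ∧ Q i then f i else 0) + ∑ i ∈ s with P i ∧ ¬ Q i, f i := by
    simp only [← sum_filter, ← filter_filter, sum_filter_add_sum_filter_not]
  rw [hsplit, sub_add_cancel_left, norm_neg, ← nsmul_eq_mul]
  exact (norm_sum_le _ _).trans (sum_le_card_nsmul _ _ _ fun i hi ↦ hf i (mem_filter.mp hi).1)

theorem remove_coprimality_condition_in_progressions_general {f : ℕ → E} {c ε : ℝ} (hε : 0 < ε)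
    (hf : ∀ n : ℕ, 1 ≤ n → ‖f n‖ ≤ c * (n : ℝ) ^ ε) {G q t : ℕ} {a : ℤ} (hG : 0 < G)
    (hq : q ≠ 0) (ht : 0 < t) (hqG : q.Coprime (primesProd G)) (haq : (a.gcd t).Coprime q)
    (N : ℕ) :
    ‖(∑ n ∈ Icc 1 N, if (n : ℤ) ≡ a [ZMOD (t : ℤ)] ∧ n.Coprime q then f n else 0)
        - ∑ n ∈ Icc 1 N, (if (n : ℤ) ≡ a [ZMOD (t : ℤ)] then f n else 0)‖
      ≤ c / (ε * Real.log 2) * ((q * N : ℕ) : ℝ) ^ ε * ((N : ℝ) / ((t : ℝ) * G) + 1) := by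
  have hc : 0 ≤ c := by simpa using (norm_nonneg _).trans (hf 1 le_rfl)
  have hfN : ∀ n ∈ Icc 1 N, ‖f n‖ ≤ c * (N : ℝ) ^ ε := fun n hn ↦ by
    obtain ⟨hn1, hnN⟩ := mem_Icc.mp hn
    exact (hf n hn1).trans (by gcongr)
  calc _ ≤ #{n ∈ Icc 1 N | ((n : ℕ) : ℤ) ≡ a [ZMOD t] ∧ ¬ n.Coprime q} * (c * (N : ℝ) ^ ε) :=
        norm_sum_ite_and_sub_sum_ite_le _ _ hfN
    _ ≤ #q.primeFactors * ((N : ℝ) / ((t : ℝ) * G) + 1) * (c * (N : ℝ) ^ ε) := by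
        gcongr
        exact card_modEq_and_not_coprime_le hG hq ht hqG haq N
    _ ≤ (q : ℝ) ^ ε / (ε * Real.log 2) * ((N : ℝ) / ((t : ℝ) * G) + 1) * (c * (N : ℝ) ^ ε) := by
        gcongr
        exact card_primeFactors_le_rpow hq hε
    _ = c / (ε * Real.log 2) * ((q * N : ℕ) : ℝ) ^ ε * ((N : ℝ) / ((t : ℝ) * G) + 1) := by
        rw [Nat.cast_mul, Real.mul_rpow q.cast_nonneg N.cast_nonneg]
        ring

end

/-- Lemma A.5, second formula: let `G, q, t, N` be positive
integers, `f : ℕ → ℂ` essentially bounded, suppose every prime factor of `q`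
exceeds `G` (`gcd(q, P(G)) = 1`), and let `a` be an integer with
`0 < |a| ≤ G`.  Then
`∑_{n ≤ N, n ≡ a (mod t), gcd(n,q)=1} f(n) = ∑_{n ≤ N, n ≡ a (mod t)} f(n)
  + O_ε((qN)^ε (N/(tG) + 1))`. -/
theorem remove_coprimality_condition_in_progressions
    (f : ℕ → ℂ)
    (hf : ∀ ε : ℝ, 0 < ε → ∃ c : ℝ, 0 < c ∧ ∀ n : ℕ, 1 ≤ n → ‖f n‖ ≤ c * (n : ℝ) ^ ε)
    (ε : ℝ) (hε : 0 < ε) :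
    ∃ C : ℝ, 0 < C ∧ ∀ (G q t N : ℕ) (a : ℤ), 0 < G → 0 < q → 0 < t → 0 < N →
      Nat.Coprime q (primesProd G) → a ≠ 0 → |a| ≤ (G : ℤ) →
      ‖(∑ n ∈ Finset.Icc 1 N,
            if (n : ℤ) ≡ a [ZMOD (t : ℤ)] ∧ Nat.Coprime n q then f n else 0)
          - ∑ n ∈ Finset.Icc 1 N, (if (n : ℤ) ≡ a [ZMOD (t : ℤ)] then f n else 0)‖
        ≤ C * ((q * N : ℕ) : ℝ) ^ ε * ((N : ℝ) / ((t : ℝ) * G) + 1) := by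
  obtain ⟨c, hc, hfc⟩ := hf ε hε
  refine ⟨c / (ε * Real.log 2), by positivity, fun G q t N a hG hq ht _ hqG ha haG ↦ ?_⟩
  have haq : a.natAbs.Coprime q :=
    coprime_of_le_of_coprime_primesProd (Int.natAbs_ne_zero.mpr ha)
      (by exact_mod_cast (Int.natCast_natAbs a).trans_le haG) hqG
  exact remove_coprimality_condition_in_progressions_general hε hfc hG hq.ne' ht hqG
    (haq.coprime_dvd_left (Nat.gcd_dvd_left _ _)) N
end
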